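/- Let G be a finite simple graph with n ≥ 1 vertices. Set r = n + 1, x_j = exp(2πij/n) for j = 1, …, n, and t = 0. Then the state sum Σ_{f : E → Fin (n+1)} Π_{v ∈ V} w_v(f) equals n · N_{[n]}(G), i.e., n times the number of Hamiltonian cycles of G. Here w_v(f) = x_j if the multiset of colors of the edges incident to v consists of exactly two copies of some color j with 1 ≤ j ≤ n together with deg(v)−2 copies of color n+1, and w_v(f) = 0 otherwise (in particular w_v(f) = 0 if all edges incident to v have color n+1 or if v is isolated, since t = 0). -/

import Mathlib

open scoped Classical

/-- The finset of edges of `G` incident to the vertex `v`. -/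
noncomputable def incidentEdges {V : Type*} [Fintype V] [DecidableEq V]
    (G : SimpleGraph V) (v : V) : Finset G.edgeSet :=
  Finset.univ.filter (fun e => v ∈ (e : Sym2 V))

/-- The local weight `w_v(f)`: colors are the elements of `Fin (m+1)`, the last color
playing the role of the color `r = m+1`.  The weight is `t` if every edge incident to `v`
has the last color (in particular if `v` is isolated), `x i` if the multiset of colors of
the edges incident to `v` consists of exactly two copies of the color `i` (with
`i ∈ {1, …, r-1}`) together with `deg v - 2` copies of the last color, and `0` otherwise. -/
noncomputable def localWeight {V : Type*} [Fintype V] [DecidableEq V]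
    (G : SimpleGraph V) {m : ℕ} (t : ℂ) (x : Fin m → ℂ)
    (f : G.edgeSet → Fin (m + 1)) (v : V) : ℂ :=
  if ∀ e ∈ incidentEdges G v, f e = Fin.last m then t
  else ∑ i : Fin m,
    if ((incidentEdges G v).filter (fun e => f e = i.castSucc)).card = 2 ∧
        (∀ e ∈ incidentEdges G v, f e = i.castSucc ∨ f e = Fin.last m)
    then x i else 0

/-- A (multi)cycle in `G`: a set of edges such that every vertex incident to an edge of
the set is incident to exactly two edges of the set.  It need not be connected. -/
def IsMultiCycle {V : Type*} [Fintype V] [DecidableEq V]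
    (G : SimpleGraph V) (C : Finset G.edgeSet) : Prop :=
  ∀ v : V, (∃ e ∈ C, v ∈ (e : Sym2 V)) →
    (C.filter (fun e => v ∈ (e : Sym2 V))).card = 2

/-- The graph on `V` whose edges are the edges of `C`. -/
def cycleGraph {V : Type*} [Fintype V] [DecidableEq V]
    (G : SimpleGraph V) (C : Finset G.edgeSet) : SimpleGraph V :=
  SimpleGraph.fromEdgeSet (↑(C.image (fun e => (e : Sym2 V))))

/-!
At `t = 0` a nonzero term of the state sum makes every vertex `v` select one color `g v ≠ n + 1`
carried by exactly two of its edges. So the edges not colored `n + 1` form a 2-regular spanning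
subgraph `C`, on whose components `g` is constant, and the sum over the colorings with given `C`
factors over the components: it is the product of the power sums `∑ j, x j ^ |K|`, `K` running
through the components of `C`. When the `x j` are the `n`-th roots of unity, such a power sum
vanishes unless `n ∣ |K|`, that is, unless `K` is everything, and then it equals `n`.
-/

theorem sum_pow_succ_pow_eq_ite_dvd {R : Type*} [CommRing R] [IsDomain R] {n : ℕ} {ζ : R}
    (hζ : IsPrimitiveRoot ζ n) (k : ℕ) :
    ∑ j : Fin n, (ζ ^ ((j : ℕ) + 1)) ^ k = if n ∣ k then (n : R) else 0 := by
  have swap_pow (j : ℕ) : (ζ ^ j) ^ k = (ζ ^ k) ^ j := pow_right_comm ζ j k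
  simp only [swap_pow]
  split_ifs with hk
  · simp [(hζ.pow_eq_one_iff_dvd k).2 hk]
  · have pow_ne_one : ζ ^ k ≠ 1 := fun h => hk ((hζ.pow_eq_one_iff_dvd k).1 h)
    have geom_sum_eq_zero : ∑ j ∈ Finset.range n, (ζ ^ k) ^ j = 0 := by
      refine (mul_eq_zero.1 ?_).resolve_left (sub_ne_zero.2 pow_ne_one)
      rw [mul_geom_sum, ← swap_pow, hζ.pow_eq_one, one_pow, sub_self]
    rw [Fin.sum_univ_eq_sum_range (fun j => (ζ ^ k) ^ (j + 1))]
    simp only [pow_succ]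
    rw [← Finset.sum_mul, geom_sum_eq_zero, zero_mul]

section ConnectedComponents

variable {V : Type*} {H : SimpleGraph V}

theorem eq_of_reachable_of_forall_adj_eq {α : Type*} {g : V → α}
    (hg : ∀ u v, H.Adj u v → g u = g v) {u v : V} (huv : H.Reachable u v) : g u = g v := by
  obtain ⟨p⟩ := huv
  induction p with
  | nil => rfl
  | cons hadj _ ih => exact (hg _ _ hadj).trans ih

theorem forall_adj_eq_iff_exists_comp_connectedComponentMk {α : Type*} {g : V → α} :
    (∀ u v, H.Adj u v → g u = g v) ↔ ∃ h : H.ConnectedComponent → α,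
      h ∘ H.connectedComponentMk = g := by
  constructor
  · intro hg
    exact ⟨SimpleGraph.ConnectedComponent.lift g
      fun _ _ p _ => eq_of_reachable_of_forall_adj_eq hg p.reachable, rfl⟩
  · rintro ⟨h, rfl⟩ u v huv
    exact congrArg h (SimpleGraph.ConnectedComponent.sound huv.reachable)

variable (H)

theorem connected_iff_forall_supp_eq_univ [Nonempty V] :
    H.Connected ↔ ∀ K : H.ConnectedComponent, K.supp = Set.univ := by
  constructor
  · intro hH K
    have := hH.preconnected.subsingleton_connectedComponent
    exact Set.eq_univ_of_forall fun v => Subsingleton.elim _ _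
  · intro hsupp
    refine ⟨fun u v => SimpleGraph.ConnectedComponent.exact ?_⟩
    exact Set.eq_univ_iff_forall.1 (hsupp (H.connectedComponentMk v)) u

variable [Fintype V]

theorem card_dvd_ncard_supp_iff (K : H.ConnectedComponent) :
    Fintype.card V ∣ K.supp.ncard ↔ K.supp = Set.univ := by
  rw [Set.eq_univ_iff_ncard, Nat.card_eq_fintype_card]
  refine ⟨fun hdvd => le_antisymm ?_ (Nat.le_of_dvd ?_ hdvd), fun h => h ▸ dvd_rfl⟩
  · exact Nat.card_eq_fintype_card (α := V) ▸ Set.ncard_le_card K.supp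
  · exact (Set.ncard_pos).2 K.nonempty_supp

variable [Fintype H.ConnectedComponent]

theorem prod_comp_connectedComponentMk {M : Type*} [CommMonoid M]
    (y : H.ConnectedComponent → M) :
    ∏ v, y (H.connectedComponentMk v) = ∏ K : H.ConnectedComponent, y K ^ K.supp.ncard := by
  rw [← Fintype.prod_fiberwise' H.connectedComponentMk y]
  refine Finset.prod_congr rfl fun K _ => ?_
  rw [Finset.prod_const, Finset.card_univ, ← Nat.card_eq_fintype_card]
  rfl

theorem sum_prod_eq_prod_connectedComponent_sum_pow {R α : Type*} [DecidableEq V] [CommSemiring R]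
    [Fintype α] [DecidableEq α] (x : α → R) :
    ∑ g : V → α with ∀ u v, H.Adj u v → g u = g v, ∏ v, x (g v) =
      ∏ K : H.ConnectedComponent, ∑ a, x a ^ K.supp.ncard := by
  have mk_surjective : Function.Surjective H.connectedComponentMk := Quot.mk_surjective
  rw [Finset.prod_univ_sum, Fintype.piFinset_univ]
  symm
  refine Finset.sum_nbij (· ∘ H.connectedComponentMk) ?_ ?_ ?_ ?_
  · intro h _
    simpa using forall_adj_eq_iff_exists_comp_connectedComponentMk.2 ⟨h, rfl⟩
  · exact mk_surjective.injective_comp_right.injOn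
  · intro g hg
    obtain ⟨h, rfl⟩ := forall_adj_eq_iff_exists_comp_connectedComponentMk.1 (by simpa using hg)
    exact ⟨h, by simp, rfl⟩
  · intro h _
    exact (prod_comp_connectedComponentMk H fun K => x (h K)).symm

theorem prod_connectedComponent_sum_pow_eq_ite_connected [Nonempty V] [Decidable H.Connected]
    {R : Type*} [CommRing R] [IsDomain R] {ζ : R} (hζ : IsPrimitiveRoot ζ (Fintype.card V)) :
    ∏ K : H.ConnectedComponent,
        ∑ j : Fin (Fintype.card V), (ζ ^ ((j : ℕ) + 1)) ^ K.supp.ncard =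
      if H.Connected then (Fintype.card V : R) else 0 := by
  simp only [sum_pow_succ_pow_eq_ite_dvd hζ, card_dvd_ncard_supp_iff, Fintype.prod_ite_zero,
    ← connected_iff_forall_supp_eq_univ]
  refine if_ctx_congr Iff.rfl (fun hH => ?_) fun _ => rfl
  have := hH.preconnected.subsingleton_connectedComponent
  rw [Fintype.prod_subsingleton _ (H.connectedComponentMk (Classical.arbitrary V))]

end ConnectedComponents

section CycleGraph

variable {V : Type*} [Fintype V] [DecidableEq V] {G : SimpleGraph V}

theorem cycleGraph_adj {C : Finset G.edgeSet} {u v : V} :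
    (cycleGraph G C).Adj u v ↔ ∃ e ∈ C, (e : Sym2 V) = s(u, v) := by
  simp only [cycleGraph, Finset.image_id', SimpleGraph.fromEdgeSet_adj, Finset.mem_coe,
    Finset.bind_def, Finset.mem_sup, Finset.pure_def, Finset.mem_singleton, eq_comm (b := s(u, v))]
  refine ⟨And.left, fun h => ⟨h, ?_⟩⟩
  obtain ⟨e, -, he⟩ := h
  exact SimpleGraph.Adj.ne (he ▸ e.2 : s(u, v) ∈ G.edgeSet)

theorem edgeFinset_cycleGraph (C : Finset G.edgeSet) :
    (cycleGraph G C).edgeFinset = C.map (Function.Embedding.subtype _) := by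
  ext e
  induction e with
  | _ u v => simp [cycleGraph_adj]

theorem card_edgeFinset_cycleGraph (C : Finset G.edgeSet) :
    (cycleGraph G C).edgeFinset.card = C.card := by
  rw [edgeFinset_cycleGraph, Finset.card_map]

theorem degree_cycleGraph (C : Finset G.edgeSet) (v : V) :
    (cycleGraph G C).degree v = (C ∩ incidentEdges G v).card := by
  have incident_eq : C ∩ incidentEdges G v = C.filter fun e : G.edgeSet => v ∈ (e : Sym2 V) := by
    ext e
    simp [incidentEdges]
  rw [incident_eq, ← SimpleGraph.card_incidenceFinset_eq_degree,
    SimpleGraph.incidenceFinset_eq_filter, edgeFinset_cycleGraph, Finset.filter_map,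
    Finset.card_map]
  rfl

theorem isMultiCycle_iff_degree_cycleGraph {C : Finset G.edgeSet} :
    IsMultiCycle G C ↔ ∀ v, (cycleGraph G C).degree v ≠ 0 → (cycleGraph G C).degree v = 2 := by
  -- Used as a `Finset (Sym2 V)`, as in `IsMultiCycle`, `C` elaborates to this monadic expression.
  have coe_eq : (do let e ← C; pure (e : Sym2 V)) = (cycleGraph G C).edgeFinset := by
    ext e
    simp [edgeFinset_cycleGraph, eq_comm]
  refine forall_congr' fun v => ?_
  rw [coe_eq, ← SimpleGraph.incidenceFinset_eq_filter, SimpleGraph.card_incidenceFinset_eq_degree]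
  refine imp_congr_left ?_
  rw [degree_cycleGraph, Finset.card_ne_zero]
  simp [Finset.Nonempty, incidentEdges]

theorem isMultiCycle_and_card_eq_iff_isRegularOfDegree_two {C : Finset G.edgeSet} :
    IsMultiCycle G C ∧ C.card = Fintype.card V ↔ (cycleGraph G C).IsRegularOfDegree 2 := by
  have sum_degrees : ∑ v, (cycleGraph G C).degree v = 2 * C.card := by
    rw [SimpleGraph.sum_degrees_eq_twice_card_edges, card_edgeFinset_cycleGraph]
  have sum_two : ∑ _v : V, 2 = 2 * Fintype.card V := by simp [mul_comm]
  rw [isMultiCycle_iff_degree_cycleGraph]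
  constructor
  · rintro ⟨hC, hcard⟩ v
    have degree_le_two : ∀ v ∈ Finset.univ, (cycleGraph G C).degree v ≤ 2 := by grind
    exact (Finset.sum_eq_sum_iff_of_le degree_le_two).1 (by rw [sum_degrees, sum_two, hcard]) v
      (Finset.mem_univ v)
  · intro hC
    refine ⟨fun v _ => hC v, ?_⟩
    have := sum_degrees.symm.trans ((Finset.sum_congr rfl fun v _ => hC v).trans sum_two)
    omega

end CycleGraph

section StateSum

variable {V : Type*} [Fintype V] [DecidableEq V] {G : SimpleGraph V} {m : ℕ}

/-- The edge coloring `f` selects the color `i` at `v`: exactly two edges at `v` have color `i`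
and the others have the last color. This is the case `w_v(f) = x i` of `localWeight`. -/
def SelectsColor (f : G.edgeSet → Fin (m + 1)) (v : V) (i : Fin m) : Prop :=
  ((incidentEdges G v).filter fun e => f e = i.castSucc).card = 2 ∧
    ∀ e ∈ incidentEdges G v, f e = i.castSucc ∨ f e = Fin.last m

/-- The edges which `f` does not give the last color, the last color marking the edges left out of
the cycle. -/
noncomputable def coloredEdges (f : G.edgeSet → Fin (m + 1)) : Finset G.edgeSet :=
  Finset.univ.filter fun e => f e ≠ Fin.last m

/-- The edge coloring `f` is subordinate to the vertex coloring `g`: every edge not of the last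
color has the color of each of its two endpoints. -/
def IsSubordinate (f : G.edgeSet → Fin (m + 1)) (g : V → Fin m) : Prop :=
  ∀ v, ∀ e ∈ incidentEdges G v, f e = (g v).castSucc ∨ f e = Fin.last m

theorem localWeight_zero (x : Fin m → ℂ) (f : G.edgeSet → Fin (m + 1)) (v : V) :
    localWeight G 0 x f v = ∑ i, if SelectsColor f v i then x i else 0 := by
  unfold localWeight
  split_ifs with hlast
  · refine (Finset.sum_eq_zero fun i _ => if_neg fun hi => ?_).symm
    obtain ⟨e, he⟩ := Finset.card_pos.1 (hi.1 ▸ Nat.two_pos)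
    obtain ⟨he_inc, he_color⟩ := Finset.mem_filter.1 he
    exact i.castSucc_ne_last (he_color.symm.trans (hlast e he_inc))
  · exact Finset.sum_congr rfl fun i _ => if_congr Iff.rfl rfl rfl

theorem prod_localWeight_zero (x : Fin m → ℂ) (f : G.edgeSet → Fin (m + 1)) :
    ∏ v, localWeight G 0 x f v =
      ∑ g : V → Fin m with ∀ v, SelectsColor f v (g v), ∏ v, x (g v) := by
  simp only [localWeight_zero]
  rw [Finset.prod_univ_sum, Fintype.piFinset_univ, Finset.sum_filter]
  exact Finset.sum_congr rfl fun g _ => Fintype.prod_ite_zero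

theorem forall_selectsColor_iff {f : G.edgeSet → Fin (m + 1)} {g : V → Fin m} :
    (∀ v, SelectsColor f v (g v)) ↔
      (cycleGraph G (coloredEdges f)).IsRegularOfDegree 2 ∧ IsSubordinate f g := by
  simp only [SelectsColor, forall_and]
  refine and_congr_left fun hfg => forall_congr' fun v => ?_
  have filter_eq : (incidentEdges G v).filter (fun e => f e = (g v).castSucc) =
      coloredEdges f ∩ incidentEdges G v := by
    ext e
    have := hfg v e
    have := (g v).castSucc_ne_last
    simp only [coloredEdges, Finset.mem_filter, Finset.mem_inter, Finset.mem_univ, true_and]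
    grind
  rw [filter_eq, degree_cycleGraph]

theorem coloredEdges_injOn_isSubordinate (g : V → Fin m) :
    Set.InjOn coloredEdges {f : G.edgeSet → Fin (m + 1) | IsSubordinate f g} := by
  intro f hf f' hf' heq
  funext e
  have same_support : f e ≠ Fin.last m ↔ f' e ≠ Fin.last m := by
    simpa [coloredEdges] using Finset.ext_iff.1 heq e
  have hinc : e ∈ incidentEdges G (Quot.out (e : Sym2 V)).1 := by
    simp [incidentEdges, Sym2.out_fst_mem]
  have := hf _ e hinc
  have := hf' _ e hinc
  grind

theorem IsSubordinate.eq_of_adj {f : G.edgeSet → Fin (m + 1)} {g : V → Fin m}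
    (hfg : IsSubordinate f g) (u v : V) (huv : (cycleGraph G (coloredEdges f)).Adj u v) :
    g u = g v := by
  obtain ⟨e, he, he_eq⟩ := cycleGraph_adj.1 huv
  have hne : f e ≠ Fin.last m := by simpa [coloredEdges] using he
  have color_eq (w : V) (hw : w ∈ (e : Sym2 V)) : f e = (g w).castSucc :=
    (hfg w e (by simpa [incidentEdges] using hw)).resolve_right hne
  apply Fin.castSucc_injective m
  rw [← color_eq u (by simp [he_eq]), ← color_eq v (by simp [he_eq])]

theorem exists_isSubordinate_coloredEdges_eq {C : Finset G.edgeSet} {g : V → Fin m}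
    (hg : ∀ u v, (cycleGraph G C).Adj u v → g u = g v) :
    ∃ f : G.edgeSet → Fin (m + 1), IsSubordinate f g ∧ coloredEdges f = C := by
  refine ⟨fun e => if e ∈ C then (g (Quot.out (e : Sym2 V)).1).castSucc else Fin.last m, ?_, ?_⟩
  · intro v e hv
    by_cases he : e ∈ C
    · left
      have hv : v ∈ (e : Sym2 V) := by simpa [incidentEdges] using hv
      have out_eq : g (Quot.out (e : Sym2 V)).1 = g v := by
        by_cases h : (Quot.out (e : Sym2 V)).1 = v
        · rw [h]
        · exact hg _ _ (cycleGraph_adj.2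
            ⟨e, he, (Sym2.mem_and_mem_iff h).1 ⟨Sym2.out_fst_mem _, hv⟩⟩)
      exact (if_pos he).trans (congrArg Fin.castSucc out_eq)
    · exact Or.inr (if_neg he)
  · ext e
    by_cases he : e ∈ C <;> simp [coloredEdges, he, Fin.castSucc_ne_last]

theorem card_forall_selectsColor (g : V → Fin m) :
    (Finset.univ.filter fun f : G.edgeSet → Fin (m + 1) => ∀ v, SelectsColor f v (g v)).card =
      (Finset.univ.filter fun C : Finset G.edgeSet => (cycleGraph G C).IsRegularOfDegree 2 ∧
        ∀ u v, (cycleGraph G C).Adj u v → g u = g v).card := by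
  simp only [forall_selectsColor_iff]
  refine Finset.card_nbij coloredEdges ?_ ?_ ?_
  · intro f hf
    obtain ⟨hreg, hfg⟩ := (Finset.mem_filter.1 hf).2
    exact Finset.mem_filter.2 ⟨Finset.mem_univ _, hreg, hfg.eq_of_adj⟩
  · exact (coloredEdges_injOn_isSubordinate g).mono fun f hf => (Finset.mem_filter.1 hf).2.2
  · intro C hC
    obtain ⟨hreg, hg⟩ := (Finset.mem_filter.1 hC).2
    obtain ⟨f, hfg, rfl⟩ := exists_isSubordinate_coloredEdges_eq hg
    exact ⟨f, Finset.mem_filter.2 ⟨Finset.mem_univ _, hreg, hfg⟩, rfl⟩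

theorem state_sum_zero_eq_sum_prod_connectedComponent (x : Fin m → ℂ) :
    ∑ f : G.edgeSet → Fin (m + 1), ∏ v, localWeight G 0 x f v =
      ∑ C : Finset G.edgeSet with (cycleGraph G C).IsRegularOfDegree 2,
        ∏ K : (cycleGraph G C).ConnectedComponent, ∑ i, x i ^ K.supp.ncard := by
  calc
    _ = ∑ g : V → Fin m, ∑ f : G.edgeSet → Fin (m + 1) with ∀ v, SelectsColor f v (g v),
          ∏ v, x (g v) := by
      simp only [prod_localWeight_zero]
      exact Finset.sum_comm' (by simp)
    _ = ∑ g : V → Fin m, ∑ C : Finset G.edgeSet with (cycleGraph G C).IsRegularOfDegree 2 ∧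
          ∀ u v, (cycleGraph G C).Adj u v → g u = g v, ∏ v, x (g v) := by
      simp only [Finset.sum_const, card_forall_selectsColor]
    _ = ∑ C : Finset G.edgeSet with (cycleGraph G C).IsRegularOfDegree 2,
          ∑ g : V → Fin m with ∀ u v, (cycleGraph G C).Adj u v → g u = g v, ∏ v, x (g v) :=
      Finset.sum_comm' (by simp [and_comm])
    _ = _ := Finset.sum_congr rfl fun C _ =>
      sum_prod_eq_prod_connectedComponent_sum_pow (cycleGraph G C) x

end StateSum

/-- Let `G` be a graph with `n ≥ 1` vertices.  With `r = n + 1` colors,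
`x_j = exp(2πij/n)` for `j = 1, …, n` and `t = 0`, the state sum `Σ_f Π_v w_v(f)`
equals `n` times the number of Hamiltonian cycles of `G` (connected cycles with `n`
edges, i.e. connected spanning 2-regular subgraphs). -/
theorem state_sum_eq_card_hamiltonian_cycles
    {V : Type*} [Fintype V] [DecidableEq V] (G : SimpleGraph V)
    (n : ℕ) (hn : Fintype.card V = n) (h1 : 1 ≤ n) :
    (∑ f : G.edgeSet → Fin (n + 1), ∏ v : V,
      localWeight G (0 : ℂ)
        (fun j : Fin n => Complex.exp (2 * Real.pi * Complex.I * ((j : ℕ) + 1) / n))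
        f v) =
    (n : ℂ) *
      ((Finset.univ.filter (fun C : Finset G.edgeSet =>
        IsMultiCycle G C ∧ C.card = n ∧ (cycleGraph G C).Connected)).card : ℂ) := by
  subst hn
  have : Nonempty V := Fintype.card_pos_iff.1 h1
  have hζ := Complex.isPrimitiveRoot_exp (Fintype.card V) Fintype.card_ne_zero
  have exp_eq_pow (j : ℕ) : Complex.exp (2 * Real.pi * Complex.I * (j + 1) / Fintype.card V) =
      Complex.exp (2 * Real.pi * Complex.I / Fintype.card V) ^ (j + 1) := by
    rw [← Complex.exp_nat_mul]
    push_cast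
    ring_nf
  simp only [exp_eq_pow, ← and_assoc, isMultiCycle_and_card_eq_iff_isRegularOfDegree_two]
  rw [state_sum_zero_eq_sum_prod_connectedComponent]
  simp only [prod_connectedComponent_sum_pow_eq_ite_connected _ hζ]
  rw [← Finset.sum_filter, Finset.filter_filter, Finset.sum_const, nsmul_eq_mul, mul_comm]
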